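/- (Finite speed of disturbance for the linear Schrödinger equation.) Let d ≥ 1 and let u : ℝ → 𝒮(ℝ^d; ℂ) be a Schwartz solution of the linear Schrödinger equation. Let A, B ⊆ ℝ^d be nonempty sets with dist(A,B) > 0, and assume supp u(0) ⊆ A. Then for every t ≥ 0, ‖u(t)‖_{L²(B)} ≤ (2 ‖∇u(0)‖_{L²(ℝ^d)} / dist(A,B)) · t. -/

import Mathlib

open MeasureTheory Filter
open scoped RealInnerProductSpace

noncomputable section

abbrev Ed (d : ℕ) : Type := EuclideanSpace ℝ (Fin d)

/-- The `i`-th standard basis vector of `ℝ^d`. -/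
def stdBasis {d : ℕ} (i : Fin d) : Ed d := EuclideanSpace.single i 1

/-- The `i`-th spatial partial derivative. -/
def pd {d : ℕ} (f : Ed d → ℂ) (i : Fin d) (x : Ed d) : ℂ :=
  fderiv ℝ f x (stdBasis i)

/-- The spatial Laplacian. -/
def lap {d : ℕ} (f : Ed d → ℂ) (x : Ed d) : ℂ :=
  ∑ i, pd (pd f i) i x

/-- Squared (Euclidean) pointwise norm of the spatial gradient. -/
def gradNormSq {d : ℕ} (f : Ed d → ℂ) (x : Ed d) : ℝ :=
  ∑ i, ‖pd f i x‖ ^ 2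

/-- `L²` norm of `f` restricted to a set `s`. -/
def L2On {d : ℕ} (s : Set (Ed d)) (f : Ed d → ℂ) : ℝ :=
  (∫ x in s, ‖f x‖ ^ 2) ^ (1/2 : ℝ)

/-- `L²` norm of `f` on all of `ℝ^d`. -/
def L2 {d : ℕ} (f : Ed d → ℂ) : ℝ :=
  (∫ x, ‖f x‖ ^ 2) ^ (1/2 : ℝ)

/-- `L²` norm of the spatial gradient of `f`. -/
def gradL2 {d : ℕ} (f : Ed d → ℂ) : ℝ :=
  (∫ x, gradNormSq f x) ^ (1/2 : ℝ)

/-- Distance between two sets. -/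
def setDist {d : ℕ} (A B : Set (Ed d)) : ℝ :=
  sInf (Set.image2 dist A B)

/-- A Schwartz solution of the linear Schrödinger equation:
smooth in time-space and `∂ₜ u = i Δ u`. -/
def IsLinSchrodSol (d : ℕ) (u : ℝ → SchwartzMap (Ed d) ℂ) : Prop :=
  ContDiff ℝ (⊤ : ℕ∞) (fun p : ℝ × Ed d => u p.1 p.2) ∧
  ∀ t x, deriv (fun s => u s x) t = Complex.I * lap (u t) x

/-- A Schwartz solution of the nonlinear Schrödinger equation with parameters `lam, σ`:
smooth in time-space and `∂ₜ u = i (Δ u + lam |u|^σ u)`. -/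
def IsNLSSol (d : ℕ) (lam σ : ℝ) (u : ℝ → SchwartzMap (Ed d) ℂ) : Prop :=
  ContDiff ℝ (⊤ : ℕ∞) (fun p : ℝ × Ed d => u p.1 p.2) ∧
  ∀ t x, deriv (fun s => u s x) t =
    Complex.I * (lap (u t) x + ((lam * ‖u t x‖ ^ σ : ℝ) : ℂ) * u t x)


open Set Topology in
theorem baire_const {X : Type*} (v : ℝ → X) (I : ℝ → ENNReal)
    (hIcl : ∀ N : ℕ, IsClosed {t | I t ≤ N}) (hIfin : ∀ t, I t < ⊤)
    (hIv : ∀ s t, v s = v t → I s = I t) (hvcl : ∀ c, IsClosed {t | v t = c})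
    (h2 : ∀ a b : ℝ, ∀ N : ℕ, (∀ t ∈ Ioo a b, I t ≤ N) →
      ∀ s ∈ Ioo a b, ∀ t ∈ Ioo a b, v s = v t) :
    ∀ s t, v s = v t := by
  let _ : TopologicalSpace X := ⊥
  have : DiscreteTopology X := ⟨rfl⟩
  set U : Set ℝ := {t | ∀ᶠ s in 𝓝 t, v s = v t} with hU
  have hUo : IsOpen U := by
    rw [isOpen_iff_mem_nhds]
    intro t ht
    have h1 : ∀ᶠ s in 𝓝 t, v s = v t := ht
    filter_upwards [h1, h1.eventually_nhds] with s hs hs2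
    change ∀ᶠ r in 𝓝 s, v r = v s
    filter_upwards [hs2] with r hr
    rw [hr, hs]
  have hcont : ∀ t ∈ U, ContinuousAt v t := by
    intro t ht
    have h1 : ∀ᶠ s in 𝓝 t, v s = v t := ht
    have : v =ᶠ[𝓝 t] fun _ => v t := h1
    exact this.continuousAt
  have hconst : ∀ S : Set ℝ, IsPreconnected S → S ⊆ U → ∀ x ∈ S, ∀ y ∈ S, v x = v y := by
    intro S hS hSU x hx y hy
    exact hS.constant (fun z hz => (hcont z (hSU hz)).continuousWithinAt) hx hy
  suffices hK : Uᶜ = ∅ by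
    intro s t
    refine hconst univ isPreconnected_univ ?_ s (mem_univ _) t (mem_univ _)
    rw [compl_empty_iff.mp hK]
  by_contra hne
  have hne : (Uᶜ).Nonempty := nonempty_iff_ne_empty.mpr hne
  have hKc : IsClosed Uᶜ := hUo.isClosed_compl
  have : Nonempty (Uᶜ : Set ℝ) := hne.to_subtype
  have : CompleteSpace (Uᶜ : Set ℝ) := hKc.completeSpace_coe
  obtain ⟨N, hN⟩ := nonempty_interior_of_iUnion_of_closed
    (X := (Uᶜ : Set ℝ)) (f := fun N : ℕ => {t : (Uᶜ : Set ℝ) | I t ≤ N})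
    (fun N => (hIcl N).preimage continuous_subtype_val)
    (by
      rw [eq_univ_iff_forall]
      intro t
      obtain ⟨n, hn⟩ := ENNReal.exists_nat_gt (hIfin t).ne
      exact mem_iUnion.mpr ⟨n, hn.le⟩)
  obtain ⟨⟨k, hkK⟩, hk⟩ := hN
  rw [mem_interior_iff_mem_nhds, nhds_subtype_eq_comap, Filter.mem_comap] at hk
  obtain ⟨V, hV, hVs⟩ := hk
  obtain ⟨a, b, ⟨hak, hkb⟩, hab⟩ := mem_nhds_iff_exists_Ioo_subset.mp hV
  have hJK : ∀ t ∈ Ioo a b, t ∈ Uᶜ → I t ≤ N := by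
    intro t ht htK
    exact hVs (show (⟨t, htK⟩ : (Uᶜ : Set ℝ)) ∈ Subtype.val ⁻¹' V from hab ht)
  have hall : ∀ t ∈ Ioo a b, I t ≤ N := by
    intro s hs
    by_cases hsK : s ∈ Uᶜ
    · exact hJK s hs hsK
    have hcomp : IsCompact (uIcc k s ∩ Uᶜ) := isCompact_uIcc.inter_right hKc
    obtain ⟨k', ⟨hk1, hk2⟩, hmin⟩ := hcomp.exists_isMinOn ⟨k, left_mem_uIcc, hkK⟩
      (f := fun r => |r - s|) (by fun_prop)
    have hmin' : ∀ r ∈ uIcc k s, r ∈ Uᶜ → |k' - s| ≤ |r - s| := fun r h1 h2 => hmin ⟨h1, h2⟩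
    have hsub : uIcc k s ⊆ Ioo a b := by
      intro r hr
      rw [mem_uIcc] at hr
      constructor <;> rcases hr with h | h <;> linarith [h.1, h.2, hs.1, hs.2]
    have hks : k' ≠ s := fun h => hsK (h ▸ hk2)
    have : v k' = v s := by
      rcases lt_or_gt_of_ne hks with hlt | hgt
      · have hsubU : Ioc k' s ⊆ U := by
          intro r hr
          by_contra hrU
          have h1 := hmin' r (by
            rw [mem_uIcc] at hk1 ⊢
            rcases hk1 with h | h
            · left; constructor <;> linarith [hr.1, hr.2, h.1]
            · linarith [h.1]) hrU
          rw [abs_of_neg (by linarith), abs_of_nonpos (by linarith [hr.2])] at h1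
          linarith [hr.1]
        have hc : Ioc k' s ⊆ {t | v t = v s} := fun r hr =>
          hconst _ isPreconnected_Ioc hsubU r hr s ⟨hlt, le_rfl⟩
        have := closure_minimal hc (hvcl _)
        rw [closure_Ioc hlt.ne] at this
        exact this ⟨le_rfl, hlt.le⟩
      · have hsubU : Ico s k' ⊆ U := by
          intro r hr
          by_contra hrU
          have h1 := hmin' r (by
            rw [mem_uIcc] at hk1 ⊢
            rcases hk1 with h | h
            · linarith [h.2]
            · right; constructor <;> linarith [hr.1, hr.2, h.2]) hrU
          rw [abs_of_pos (by linarith), abs_of_nonneg (by linarith [hr.1])] at h1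
          linarith [hr.2]
        have hc : Ico s k' ⊆ {t | v t = v s} := fun r hr =>
          hconst _ isPreconnected_Ico hsubU r hr s ⟨le_rfl, hgt⟩
        have := closure_minimal hc (hvcl _)
        rw [closure_Ico hgt.ne] at this
        exact this ⟨hgt.le, le_rfl⟩
    rw [← hIv _ _ this]
    exact hJK k' (hsub hk1) hk2
  refine hkK ?_
  change ∀ᶠ s in 𝓝 k, v s = v k
  filter_upwards [Ioo_mem_nhds hak hkb] with s hs
  exact h2 a b N hall s hs k ⟨hak, hkb⟩

open Set Topology in
theorem hasDerivAt_integral_cpt {d : ℕ} {G : Type*} [NormedAddCommGroup G] [NormedSpace ℝ G]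
    {F F' : ℝ → Ed d → G} {K : Set (Ed d)} (hK : IsCompact K)
    (hF : ∀ s, Continuous (F s)) (hF' : Continuous (fun p : ℝ × Ed d => F' p.1 p.2))
    (hd : ∀ s x, HasDerivAt (fun r => F r x) (F' s x) s)
    (h0 : ∀ s, ∀ x ∉ K, F s x = 0) (s : ℝ) :
    HasDerivAt (fun r => ∫ x, F r x) (∫ x, F' s x) s := by
  have h0' : ∀ s, ∀ x ∉ K, F' s x = 0 := by
    intro s x hx
    have h1 := hd s x
    have h2 : (fun r => F r x) = fun _ => 0 := funext fun r => h0 r x hx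
    rw [h2] at h1
    exact h1.unique (hasDerivAt_const s 0)
  obtain ⟨C, hC⟩ := ((isCompact_closedBall s 1).prod hK).exists_bound_of_continuousOn
    hF'.continuousOn
  have hcomp : ∀ r, Continuous (F' r) := fun r => hF'.comp (by fun_prop : Continuous fun x => (r, x))
  refine (hasDerivAt_integral_of_dominated_loc_of_deriv_le (Metric.closedBall_mem_nhds s one_pos)
    (bound := K.indicator fun _ => C) ?_ ?_ ?_ ?_ ?_ ?_).2
  · exact Eventually.of_forall fun r => (hF r).aestronglyMeasurable
  · exact (hF s).integrable_of_hasCompactSupport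
      (HasCompactSupport.intro hK fun x hx => h0 s x hx)
  · exact (hcomp s).aestronglyMeasurable
  · refine Eventually.of_forall fun x r hr => ?_
    by_cases hx : x ∈ K
    · rw [indicator_of_mem hx]
      exact hC (r, x) ⟨hr, hx⟩
    · rw [indicator_of_notMem hx, h0' r x hx, norm_zero]
  · rw [integrable_indicator_iff hK.measurableSet]
    exact integrableOn_const hK.measure_lt_top.ne
  · exact Eventually.of_forall fun x r _ => hd r x

theorem isClosed_lintegral_le {d : ℕ} {f : ℝ → Ed d → ℝ}
    (hf : Continuous (fun p : ℝ × Ed d => f p.1 p.2)) (N : ENNReal) :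
    IsClosed {t | ∫⁻ x, ENNReal.ofReal (f t x) ≤ N} := by
  apply IsSeqClosed.isClosed
  intro t t0 ht hlim
  have hc : ∀ x, Tendsto (fun n => ENNReal.ofReal (f (t n) x)) atTop
      (nhds (ENNReal.ofReal (f t0 x))) := by
    intro x
    have : Continuous fun r => ENNReal.ofReal (f r x) :=
      ENNReal.continuous_ofReal.comp (hf.comp (by fun_prop : Continuous fun r => (r, x)))
    exact (this.tendsto t0).comp hlim
  have hm : ∀ n, Measurable fun x => ENNReal.ofReal (f (t n) x) := fun n =>
    (ENNReal.continuous_ofReal.comp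
      (hf.comp (by fun_prop : Continuous fun x => (t n, x)))).measurable
  calc ∫⁻ x, ENNReal.ofReal (f t0 x)
      = ∫⁻ x, liminf (fun n => ENNReal.ofReal (f (t n) x)) atTop := by
        congr 1; ext x; exact (hc x).liminf_eq.symm
    _ ≤ liminf (fun n => ∫⁻ x, ENNReal.ofReal (f (t n) x)) atTop := lintegral_liminf_le hm
    _ ≤ N := liminf_le_of_le (by isBoundedDefault) (fun b hb => by
        obtain ⟨n, hn⟩ := hb.exists
        exact hn.trans (ht n))

open scoped LineDeriv FourierTransform ContDiff SchwartzMap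

theorem schwartz_bound {d : ℕ} {G : Type*} [NormedAddCommGroup G] [NormedSpace ℝ G]
    (f : 𝓢(Ed d, G)) : ∃ C : ℝ, 0 ≤ C ∧ ∀ x, ‖f x‖ ≤ C := by
  obtain ⟨C, hC, h⟩ := f.decay 0 0
  exact ⟨C, hC.le, fun x => by simpa using h x⟩

theorem schwartz_lipschitz {d : ℕ} (f : 𝓢(Ed d, ℂ)) : ∃ C : NNReal, LipschitzWith C f := by
  obtain ⟨C, hC, h⟩ := schwartz_bound (SchwartzMap.fderivCLM ℝ (Ed d) ℂ f)
  refine ⟨C.toNNReal, lipschitzWith_of_nnnorm_fderiv_le (𝕜 := ℝ) f.differentiable fun x => ?_⟩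
  rw [← NNReal.coe_le_coe, Real.coe_toNNReal _ hC]
  exact h x

theorem lineDeriv_mul_integrable {d : ℕ} {w : Ed d → ℝ} {C : NNReal} (hw : LipschitzWith C w)
    {G : Ed d → ℂ} (hG : Integrable G) (v : Ed d) :
    Integrable (fun x => ((lineDeriv ℝ w x v : ℝ) : ℂ) * G x) := by
  refine hG.bdd_mul (c := C * ‖v‖) ?_ ?_
  · exact (Complex.measurable_ofReal.comp (measurable_lineDeriv hw.continuous)).aestronglyMeasurable
  · refine Eventually.of_forall fun x => ?_
    rw [Complex.norm_real]
    exact norm_lineDeriv_le_of_lipschitz ℝ hw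

theorem ibp {d : ℕ} {w : Ed d → ℝ} {C : NNReal} (hw : LipschitzWith C w)
    (hws : HasCompactSupport w) (G : 𝓢(Ed d, ℂ)) (v : Ed d) :
    ∫ x, (w x : ℂ) * ∂_{v} G x = - ∫ x, ((lineDeriv ℝ w x v : ℝ) : ℂ) * G x := by
  obtain ⟨D, hD⟩ := schwartz_lipschitz G
  have i1 : Integrable (fun x => (w x : ℂ) * ∂_{v} G x) := by
    refine Continuous.integrable_of_hasCompactSupport ?_ ?_
    · exact (Complex.continuous_ofReal.comp hw.continuous).mul (∂_{v} G).continuous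
    · exact HasCompactSupport.mul_right (hws.comp_left Complex.ofReal_zero)
  have i2 := lineDeriv_mul_integrable hw G.integrable v (d := d)
  have key : ∀ (L : ℂ →L[ℝ] ℝ), LipschitzWith 1 L →
      L (∫ x, (w x : ℂ) * ∂_{v} G x) = L (- ∫ x, ((lineDeriv ℝ w x v : ℝ) : ℂ) * G x) := by
    intro L hL
    rw [map_neg, ← L.integral_comp_comm i1, ← L.integral_comp_comm i2, ← integral_neg]
    have hf : LipschitzWith (1 * D) (fun x => L (G x)) := hL.comp hD
    have := hf.integral_lineDeriv_mul_eq (μ := volume) hw hws v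
    have e1 : ∀ x, L ((w x : ℂ) * ∂_{v} G x) = lineDeriv ℝ (fun x => L (G x)) x v * w x := by
      intro x
      have h1 : HasFDerivAt (fun x => L (G x)) (L.comp (fderiv ℝ G x)) x :=
        L.hasFDerivAt.comp x (G.hasFDerivAt x)
      rw [h1.differentiableAt.lineDeriv_eq_fderiv, h1.fderiv, ← Complex.real_smul, map_smul,
        smul_eq_mul, mul_comm]
      rfl
    have e2 : ∀ x, -(L (((lineDeriv ℝ w x v : ℝ) : ℂ) * G x)) = lineDeriv ℝ w x (-v) * L (G x) := by
      intro x
      rw [lineDeriv_neg, ← Complex.real_smul, map_smul, smul_eq_mul, neg_mul]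
    simp_rw [e1, e2]
    exact this
  apply Complex.ext
  · exact key Complex.reCLM (by
      refine LipschitzWith.of_dist_le_mul fun x y => ?_
      simpa [dist_eq_norm] using Complex.abs_re_le_norm (x - y))
  · exact key Complex.imCLM (by
      refine LipschitzWith.of_dist_le_mul fun x y => ?_
      simpa [dist_eq_norm] using Complex.abs_im_le_norm (x - y))

theorem joint_deriv {d : ℕ} {f : ℝ → 𝓢(Ed d, ℂ)}
    (hf : ContDiff ℝ (⊤ : ℕ∞) (fun p : ℝ × Ed d => f p.1 p.2)) (v : Ed d) :
    ContDiff ℝ (⊤ : ℕ∞) (fun p : ℝ × Ed d => (∂_{v} (f p.1)) p.2) := by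
  have h : (fun p : ℝ × Ed d => (∂_{v} (f p.1)) p.2) =
      fun p => fderiv ℝ (fun p : ℝ × Ed d => f p.1 p.2) p (0, v) := by
    ext ⟨t, x⟩
    have h1 : HasFDerivAt (fun y : Ed d => (t, y)) (ContinuousLinearMap.inr ℝ ℝ (Ed d)) x :=
      hasFDerivAt_prodMk_right t x
    have h2 := (hf.differentiable (by simp) (t, x)).hasFDerivAt.comp x h1
    have h3 : fderiv ℝ (f t) x = _ := h2.fderiv
    rw [SchwartzMap.lineDerivOp_apply_eq_fderiv, h3]
    simp
  rw [h]
  exact (hf.fderiv_right (by simp)).clm_apply contDiff_const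

/-- the phase -/
def ph {d : ℕ} (s : ℝ) (ξ : Ed d) : ℂ :=
  Complex.exp (Complex.I * ((((2 * Real.pi) ^ 2 * s * ∑ i, ξ i ^ 2 : ℝ)) : ℂ))

theorem norm_ph {d : ℕ} (s : ℝ) (ξ : Ed d) : ‖ph s ξ‖ = 1 := by
  unfold ph
  rw [mul_comm, Complex.norm_exp_ofReal_mul_I]

theorem ph_contDiff {d : ℕ} : ContDiff ℝ (⊤ : ℕ∞) (fun p : ℝ × Ed d => ph p.1 p.2) := by
  unfold ph
  have : ContDiff ℝ (⊤ : ℕ∞) (fun p : ℝ × Ed d => (2 * Real.pi) ^ 2 * p.1 * ∑ i, p.2 i ^ 2) := by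
    fun_prop
  exact (contDiff_const.mul (Complex.ofRealCLM.contDiff.comp this)).cexp

theorem ph_contDiff' {d : ℕ} (s : ℝ) : ContDiff ℝ (⊤ : ℕ∞) (fun x : Ed d => ph s x) :=
  ph_contDiff.comp (contDiff_prodMk_right s)

/-- modulated test function -/
def Mdl {d : ℕ} (g : Ed d → ℂ) (hg : ContDiff ℝ (⊤ : ℕ∞) g) (hs : HasCompactSupport g) (s : ℝ) :
    𝓢(Ed d, ℂ) :=
  HasCompactSupport.toSchwartzMap (f := fun ξ => ph s ξ * g ξ) hs.mul_left
    ((ph_contDiff' s).mul hg)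

theorem Mdl_apply {d : ℕ} (g : Ed d → ℂ) (hg : ContDiff ℝ (⊤ : ℕ∞) g) (hs : HasCompactSupport g)
    (s : ℝ) (ξ : Ed d) : Mdl g hg hs s ξ = ph s ξ * g ξ := rfl

theorem fourier_Mdl {d : ℕ} (g : Ed d → ℂ) (hg : ContDiff ℝ (⊤ : ℕ∞) g) (hs : HasCompactSupport g)
    (s : ℝ) (x : Ed d) : 𝓕 (Mdl g hg hs s) x =
      ∫ ξ, Complex.exp (((-2 * Real.pi * inner ℝ ξ x : ℝ) : ℂ) * Complex.I) * (ph s ξ * g ξ) := by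
  rw [SchwartzMap.fourier_coe, Real.fourier_eq']
  simp only [Mdl_apply, smul_eq_mul]

theorem fourier_Mdl_cont {d : ℕ} (g : Ed d → ℂ) (hg : ContDiff ℝ (⊤ : ℕ∞) g)
    (hs : HasCompactSupport g) :
    Continuous (fun p : ℝ × Ed d => 𝓕 (Mdl g hg hs p.1) p.2) := by
  simp only [fourier_Mdl]
  have hgc := hg.continuous
  have hph := (ph_contDiff (d := d)).continuous
  refine continuous_of_dominated (bound := fun ξ => ‖g ξ‖) ?_ ?_ ?_ ?_
  · intro p
    have := (ph_contDiff' (d := d) p.1).continuous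
    exact Continuous.aestronglyMeasurable (by fun_prop)
  · intro p
    refine Eventually.of_forall fun ξ => ?_
    rw [norm_mul, norm_mul, norm_ph, Complex.norm_exp_ofReal_mul_I]
    simp
  · exact (hgc.integrable_of_hasCompactSupport hs).norm
  · refine Eventually.of_forall fun ξ => ?_
    have : Continuous fun p : ℝ × Ed d => ph p.1 ξ :=
      hph.comp (by fun_prop : Continuous fun p : ℝ × Ed d => (p.1, ξ))
    fun_prop

theorem fourier_Mdl_deriv {d : ℕ} (g : Ed d → ℂ) (hg : ContDiff ℝ (⊤ : ℕ∞) g)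
    (hs : HasCompactSupport g) (g' : Ed d → ℂ) (hg' : ContDiff ℝ (⊤ : ℕ∞) g')
    (hs' : HasCompactSupport g')
    (h : ∀ ξ, g' ξ = Complex.I * ((((2 * Real.pi) ^ 2 * ∑ i, ξ i ^ 2 : ℝ)) : ℂ) * g ξ)
    (s : ℝ) (x : Ed d) :
    HasDerivAt (fun r => 𝓕 (Mdl g hg hs r) x) (𝓕 (Mdl g' hg' hs' s) x) s := by
  simp only [fourier_Mdl]
  have hgc := hg.continuous
  have hgc' := hg'.continuous
  have hph := (ph_contDiff (d := d)).continuous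
  refine hasDerivAt_integral_cpt (F := fun r ξ => Complex.exp (((-2 * Real.pi * inner ℝ ξ x : ℝ) : ℂ) * Complex.I) * (ph r ξ * g ξ)) (F' := fun r ξ => Complex.exp (((-2 * Real.pi * inner ℝ ξ x : ℝ) : ℂ) * Complex.I) * (ph r ξ * g' ξ)) hs.isCompact ?_ ?_ ?_ ?_ s
  · intro r
    have := (ph_contDiff' (d := d) r).continuous
    fun_prop
  · fun_prop
  · intro r ξ
    rw [h, show ph r ξ * (Complex.I * ((((2 * Real.pi) ^ 2 * ∑ i, ξ i ^ 2 : ℝ)) : ℂ) * g ξ)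
      = (ph r ξ * (Complex.I * ((((2 * Real.pi) ^ 2 * ∑ i, ξ i ^ 2 : ℝ)) : ℂ))) * g ξ by ring]
    refine HasDerivAt.const_mul _ (HasDerivAt.mul_const ?_ _)
    unfold ph
    refine HasDerivAt.cexp (HasDerivAt.const_mul _ (HasDerivAt.ofReal_comp ?_))
    have := ((hasDerivAt_id r).const_mul ((2 * Real.pi) ^ 2)).mul_const (∑ i, ξ i ^ 2)
    simpa using this
  · intro r ξ hξ
    rw [image_eq_zero_of_notMem_tsupport hξ, mul_zero, mul_zero]

theorem fourier_Mdl_lineDeriv {d : ℕ} (g : Ed d → ℂ) (hg : ContDiff ℝ (⊤ : ℕ∞) g)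
    (hs : HasCompactSupport g) (g' : Ed d → ℂ) (hg' : ContDiff ℝ (⊤ : ℕ∞) g')
    (hs' : HasCompactSupport g') (i : Fin d)
    (h : ∀ ξ, g' ξ = -(2 * Real.pi * Complex.I) * ((ξ i : ℝ) : ℂ) * g ξ) (s : ℝ) :
    ∂_{stdBasis i} (𝓕 (Mdl g hg hs s)) = 𝓕 (Mdl g' hg' hs' s) := by
  rw [SchwartzMap.lineDerivOp_fourier_eq]
  congr 1
  ext ξ
  have : (fun x : Ed d => inner ℝ x (stdBasis i)).HasTemperateGrowth := by fun_prop
  have hi : inner ℝ ξ (stdBasis i) = ξ i := by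
    simp [stdBasis, EuclideanSpace.inner_single_right]
  rw [smul_apply, SchwartzMap.smulLeftCLM_apply_apply this, Mdl_apply, hi, Mdl_apply,
    Complex.real_smul, smul_eq_mul, h]
  ring

theorem fourier_Mdl_norm {d : ℕ} (g : Ed d → ℂ) (hg : ContDiff ℝ (⊤ : ℕ∞) g)
    (hs : HasCompactSupport g) (s : ℝ) :
    ∫ x, ‖𝓕 (Mdl g hg hs s) x‖ ^ 2 = ∫ x, ‖g x‖ ^ 2 := by
  rw [SchwartzMap.integral_norm_sq_fourier]
  simp [Mdl_apply, norm_ph]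

/-- partial derivative on Schwartz maps -/
def Dd {d : ℕ} (i : Fin d) (f : 𝓢(Ed d, ℂ)) : 𝓢(Ed d, ℂ) := ∂_{stdBasis i} f

/-- Fourier transform on Schwartz maps -/
def FT {d : ℕ} (f : 𝓢(Ed d, ℂ)) : 𝓢(Ed d, ℂ) := 𝓕 f

theorem intSq {d : ℕ} {g : Ed d → ℂ} (hg : Continuous g) (hs : HasCompactSupport g) :
    Integrable (fun x => ‖g x‖ ^ 2) := by
  have h1 : Continuous (fun x => ‖g x‖ ^ 2) := by fun_prop
  refine h1.integrable_of_hasCompactSupport (HasCompactSupport.intro hs.isCompact fun x hx => ?_)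
  rw [image_eq_zero_of_notMem_tsupport hx]
  simp

/-- There is a good family of test solutions for each test function. -/
theorem exists_test {d : ℕ} (g : Ed d → ℂ) (hg : ContDiff ℝ (⊤ : ℕ∞) g)
    (hs : HasCompactSupport g) : ∃ ψ : ℝ → 𝓢(Ed d, ℂ), ∃ C : ℝ,
      Continuous (fun p : ℝ × Ed d => ψ p.1 p.2) ∧
      Continuous (fun p : ℝ × Ed d => ∑ i, Dd i (Dd i (ψ p.1)) p.2) ∧
      (∀ s x, HasDerivAt (fun r => ψ r x)
        (-Complex.I * ∑ i, Dd i (Dd i (ψ s)) x) s) ∧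
      (∀ s, ∫ x, ‖ψ s x‖ ^ 2 ≤ C) ∧ (∀ s i, ∫ x, ‖Dd i (ψ s) x‖ ^ 2 ≤ C) ∧
      (∀ s (f : 𝓢(Ed d, ℂ)), ∫ x, f x * ψ s x = ∫ ξ, g ξ * (ph s ξ * FT f ξ)) := by
  set g1 : Fin d → Ed d → ℂ := fun i ξ => -(2 * Real.pi * Complex.I) * ((ξ i : ℝ) : ℂ) * g ξ
  have hco : ∀ i, ContDiff ℝ (⊤ : ℕ∞) (fun ξ : Ed d => ((ξ i : ℝ) : ℂ)) := fun i =>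
    Complex.ofRealCLM.contDiff.comp (by fun_prop : ContDiff ℝ (⊤ : ℕ∞) fun ξ : Ed d => ξ i)
  have hg1 : ∀ i, ContDiff ℝ (⊤ : ℕ∞) (g1 i) := fun i => (contDiff_const.mul (hco i)).mul hg
  have hs1 : ∀ i, HasCompactSupport (g1 i) := fun i => hs.mul_left
  set g2 : Fin d → Ed d → ℂ := fun i ξ => -(2 * Real.pi * Complex.I) * ((ξ i : ℝ) : ℂ) * g1 i ξ
  have hg2 : ∀ i, ContDiff ℝ (⊤ : ℕ∞) (g2 i) := fun i => (contDiff_const.mul (hco i)).mul (hg1 i)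
  have hs2 : ∀ i, HasCompactSupport (g2 i) := fun i => (hs1 i).mul_left
  set g3 : Ed d → ℂ := fun ξ =>
    Complex.I * ((((2 * Real.pi) ^ 2 * ∑ i, ξ i ^ 2 : ℝ)) : ℂ) * g ξ with hg3d
  have hg3 : ContDiff ℝ (⊤ : ℕ∞) g3 := (contDiff_const.mul (Complex.ofRealCLM.contDiff.comp
    (by fun_prop : ContDiff ℝ (⊤ : ℕ∞) fun ξ : Ed d => (2 * Real.pi) ^ 2 * ∑ i, ξ i ^ 2))).mul hg
  have hs3 : HasCompactSupport g3 := hs.mul_left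
  have e1 : ∀ i s, Dd i (𝓕 (Mdl g hg hs s)) = 𝓕 (Mdl (g1 i) (hg1 i) (hs1 i) s) :=
    fun i s => fourier_Mdl_lineDeriv g hg hs _ _ _ i (fun ξ => rfl) s
  have e2 : ∀ i s, Dd i (Dd i (𝓕 (Mdl g hg hs s))) =
      𝓕 (Mdl (g2 i) (hg2 i) (hs2 i) s) :=
    fun i s => by rw [e1]; exact fourier_Mdl_lineDeriv _ _ _ _ _ _ i (fun ξ => rfl) s
  refine ⟨fun s => 𝓕 (Mdl g hg hs s), ∫ x, ‖g x‖ ^ 2 + ∑ i, ‖g1 i x‖ ^ 2,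
    fourier_Mdl_cont g hg hs, ?_, ?_, ?_, ?_, ?_⟩
  · simp_rw [e2]
    exact continuous_finsetSum _ fun i _ => fourier_Mdl_cont _ _ _
  · intro s x
    convert fourier_Mdl_deriv g hg hs g3 hg3 hs3 (fun ξ => rfl) s x using 1
    simp_rw [e2, fourier_Mdl]
    rw [← integral_finsetSum, ← integral_const_mul]
    · congr 1
      ext ξ
      simp only [g2, g1, hg3d]
      push_cast
      rw [Finset.mul_sum, Finset.mul_sum, Finset.mul_sum, Finset.sum_mul, Finset.mul_sum,
        Finset.mul_sum]
      refine Finset.sum_congr rfl fun i _ => ?_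
      linear_combination (-(4 * Real.pi ^ 2 * (ξ i) ^ 2 * ph s ξ * g ξ * Complex.I *
        Complex.exp (-2 * Real.pi * (inner ℝ ξ x : ℝ) * Complex.I))) * Complex.I_sq
    · intro i _
      have h1 := (hg2 i).continuous
      have h2 := (ph_contDiff' (d := d) s).continuous
      refine Continuous.integrable_of_hasCompactSupport (by fun_prop) ?_
      exact (hs2 i).mul_left.mul_left
  all_goals
    have i0 : Integrable (fun x => ‖g x‖ ^ 2) :=
      intSq hg.continuous hs
    have i1 : ∀ i, Integrable (fun x => ‖g1 i x‖ ^ 2) := fun i =>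
      intSq (hg1 i).continuous (hs1 i)
    have i2 : Integrable (fun x => ‖g x‖ ^ 2 + ∑ i, ‖g1 i x‖ ^ 2) :=
      i0.add (integrable_finsetSum _ fun i _ => i1 i)
  · intro s
    rw [fourier_Mdl_norm]
    refine integral_mono i0 i2 fun x => ?_
    exact le_add_of_nonneg_right (Finset.sum_nonneg fun i _ => by positivity)
  · intro s i
    rw [e1, fourier_Mdl_norm]
    refine integral_mono (i1 i) i2 fun x => ?_
    have := Finset.single_le_sum (f := fun j => ‖g1 j x‖ ^ 2) (fun j _ => by positivity)
      (Finset.mem_univ i)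
    have h0 : 0 ≤ ‖g x‖ ^ 2 := by positivity
    exact this.trans (le_add_of_nonneg_left h0)
  · intro s f
    have := SchwartzMap.integral_fourier_mul_eq f (Mdl g hg hs s)
    rw [← this]
    congr 1
    ext ξ
    rw [Mdl_apply, FT]
    ring

/-- product of Schwartz functions -/
def prodS {d : ℕ} (f h : 𝓢(Ed d, ℂ)) : 𝓢(Ed d, ℂ) :=
  SchwartzMap.pairing (ContinuousLinearMap.mul ℂ ℂ) f h

theorem prodS_apply {d : ℕ} (f h : 𝓢(Ed d, ℂ)) (x : Ed d) : prodS f h x = f x * h x := rfl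

theorem Dd_apply {d : ℕ} (f : 𝓢(Ed d, ℂ)) (i : Fin d) (x : Ed d) :
    Dd i f x = fderiv ℝ f x (stdBasis i) := rfl

theorem Dd_prodS {d : ℕ} (f h : 𝓢(Ed d, ℂ)) (i : Fin d) (x : Ed d) :
    Dd i (prodS f h) x = Dd i f x * h x + f x * Dd i h x := by
  have h1 : HasFDerivAt (prodS f h) _ x := (f.hasFDerivAt x).mul (h.hasFDerivAt x)
  rw [Dd_apply, h1.fderiv, Dd_apply, Dd_apply]
  simp
  ring

theorem Dd_sub {d : ℕ} (f h : 𝓢(Ed d, ℂ)) (i : Fin d) (x : Ed d) :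
    Dd i (f - h) x = Dd i f x - Dd i h x := by
  have h1 : HasFDerivAt (f - h : 𝓢(Ed d, ℂ)) _ x := (f.hasFDerivAt x).sub (h.hasFDerivAt x)
  rw [Dd_apply, h1.fderiv, Dd_apply, Dd_apply]
  simp

/-- conjugate of Schwartz functions -/
def conjS {d : ℕ} (f : 𝓢(Ed d, ℂ)) : 𝓢(Ed d, ℂ) :=
  SchwartzMap.postcompCLM (Complex.conjCLE : ℂ →L[ℝ] ℂ) f

theorem conjS_apply {d : ℕ} (f : 𝓢(Ed d, ℂ)) (x : Ed d) :
    conjS f x = (starRingEnd ℂ) (f x) := rfl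

theorem Dd_conjS {d : ℕ} (f : 𝓢(Ed d, ℂ)) (i : Fin d) (x : Ed d) :
    Dd i (conjS f) x = (starRingEnd ℂ) (Dd i f x) := by
  have h1 : HasFDerivAt (conjS f) ((Complex.conjCLE : ℂ →L[ℝ] ℂ).comp (fderiv ℝ f x)) x :=
    (Complex.conjCLE : ℂ →L[ℝ] ℂ).hasFDerivAt.comp x (f.hasFDerivAt x)
  rw [Dd_apply, h1.fderiv, Dd_apply]
  simp

theorem sq_int {d : ℕ} (f : 𝓢(Ed d, ℂ)) : Integrable (fun x => ‖f x‖ ^ 2) := by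
  have h := (prodS f (conjS f)).integrable (μ := volume) |>.norm
  refine h.congr (Eventually.of_forall fun x => ?_)
  simp only [prodS_apply, conjS_apply, norm_mul, RCLike.norm_conj]
  ring

theorem norm_stdBasis {d : ℕ} (i : Fin d) : ‖(stdBasis i : Ed d)‖ = 1 := by
  simp [stdBasis]

theorem w_int {d : ℕ} {w : Ed d → ℝ} (hw : Continuous w)
    (hws : HasCompactSupport w) {G : Ed d → ℂ} (hG : Continuous G) :
    Integrable (fun x => (w x : ℂ) * G x) := by
  refine Continuous.integrable_of_hasCompactSupport (by fun_prop) ?_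
  exact HasCompactSupport.mul_right (hws.comp_left Complex.ofReal_zero)

theorem green {d : ℕ} {w : Ed d → ℝ} {C : NNReal} (hw : LipschitzWith C w)
    (hws : HasCompactSupport w) (f h : 𝓢(Ed d, ℂ)) {N M : ℝ}
    (hf : ∫ x, ‖f x‖ ^ 2 ≤ N) (hf' : ∀ i, ∫ x, ‖Dd i f x‖ ^ 2 ≤ N)
    (hh : ∫ x, ‖h x‖ ^ 2 ≤ M) (hh' : ∀ i, ∫ x, ‖Dd i h x‖ ^ 2 ≤ M) :
    ‖∫ x, (w x : ℂ) * ((∑ i, Dd i (Dd i f) x) * h x - f x * ∑ i, Dd i (Dd i h) x)‖ ≤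
      d * (C * (N + M)) := by
  set G : Fin d → 𝓢(Ed d, ℂ) := fun i => prodS (Dd i f) h - prodS f (Dd i h) with hG
  have hDG : ∀ i x, Dd i (G i) x = Dd i (Dd i f) x * h x - f x * Dd i (Dd i h) x := by
    intro i x
    rw [hG, Dd_sub, Dd_prodS, Dd_prodS]
    ring
  have e1 : ∀ x, (w x : ℂ) * ((∑ i, Dd i (Dd i f) x) * h x - f x * ∑ i, Dd i (Dd i h) x) =
      ∑ i, (w x : ℂ) * Dd i (G i) x := by
    intro x
    simp_rw [hDG]
    rw [← Finset.mul_sum, Finset.sum_sub_distrib, Finset.sum_mul, Finset.mul_sum]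
  simp_rw [e1]
  rw [integral_finsetSum _ fun i _ => w_int hw.continuous hws (Dd i (G i)).continuous]
  refine (norm_sum_le _ _).trans ?_
  have : ∀ i ∈ Finset.univ, ‖∫ x, (w x : ℂ) * Dd i (G i) x‖ ≤ C * (N + M) := by
    intro i _
    have h1 : ∫ x, (w x : ℂ) * Dd i (G i) x = _ := ibp hw hws (G i) (stdBasis i)
    rw [h1, norm_neg]
    have h_int : Integrable fun x => (C : ℝ) * ((‖Dd i f x‖ ^ 2 + ‖h x‖ ^ 2) / 2 +
        (‖f x‖ ^ 2 + ‖Dd i h x‖ ^ 2) / 2) :=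
      (((((sq_int (Dd i f)).add (sq_int h)).div_const 2).add
        (((sq_int f).add (sq_int (Dd i h))).div_const 2)).const_mul _)
    refine (norm_integral_le_of_norm_le h_int (Eventually.of_forall fun x => ?_)).trans ?_
    · rw [norm_mul, Complex.norm_real]
      have h2 : ‖lineDeriv ℝ w x (stdBasis i)‖ ≤ C := by
        simpa [norm_stdBasis] using norm_lineDeriv_le_of_lipschitz ℝ hw (x₀ := x) (v := stdBasis i)
      refine mul_le_mul h2 ?_ (norm_nonneg _) C.2
      have h3 : G i x = Dd i f x * h x - f x * Dd i h x := rfl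
      rw [h3]
      refine (norm_sub_le _ _).trans ?_
      rw [norm_mul, norm_mul]
      nlinarith [sq_nonneg (‖Dd i f x‖ - ‖h x‖), sq_nonneg (‖f x‖ - ‖Dd i h x‖)]
    · have j1 : Integrable fun x => (‖Dd i f x‖ ^ 2 + ‖h x‖ ^ 2) / 2 :=
        ((sq_int (Dd i f)).add (sq_int h)).div_const 2
      have j2 : Integrable fun x => (‖f x‖ ^ 2 + ‖Dd i h x‖ ^ 2) / 2 :=
        ((sq_int f).add (sq_int (Dd i h))).div_const 2
      rw [integral_const_mul, integral_add j1 j2, integral_div, integral_div,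
        integral_add (sq_int (Dd i f)) (sq_int h), integral_add (sq_int f) (sq_int (Dd i h))]
      refine mul_le_mul_of_nonneg_left ?_ C.2
      linarith [hf' i, hh' i]
  refine (Finset.sum_le_sum this).trans ?_
  simp

/-- cutoff -/
def cut {d : ℕ} (n : ℕ) (x : Ed d) : ℝ := max 0 (1 - ‖x‖ / (n + 1))

theorem cut_lip {d : ℕ} (n : ℕ) :
    LipschitzWith (Real.toNNReal (1 / (n + 1))) (cut (d := d) n) := by
  refine LipschitzWith.of_dist_le_mul fun x y => ?_
  have hn : (0 : ℝ) < n + 1 := by positivity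
  rw [Real.coe_toNNReal _ (by positivity), Real.dist_eq, cut, cut]
  refine (abs_max_sub_max_le_max _ _ _ _).trans ?_
  have e : 1 - ‖x‖ / (n + 1 : ℝ) - (1 - ‖y‖ / (n + 1)) = (1 / (n + 1)) * (‖y‖ - ‖x‖) := by
    field_simp; ring
  rw [e, sub_zero, abs_zero, abs_mul, abs_of_pos (by positivity : (0 : ℝ) < 1 / (n + 1))]
  refine max_le (by positivity) (mul_le_mul_of_nonneg_left ?_ (by positivity))
  rw [dist_comm, dist_eq_norm]
  exact abs_norm_sub_norm_le _ _

theorem cut_supp {d : ℕ} (n : ℕ) : HasCompactSupport (cut (d := d) n) := by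
  refine HasCompactSupport.intro (isCompact_closedBall (0 : Ed d) (n + 1)) fun x hx => ?_
  have hn : (0 : ℝ) < n + 1 := by positivity
  rw [Metric.mem_closedBall, dist_zero_right, not_le] at hx
  rw [cut, max_eq_left]
  rw [sub_nonpos, le_div_iff₀ hn]
  linarith

theorem cut_nonneg {d : ℕ} (n : ℕ) (x : Ed d) : 0 ≤ cut n x := le_max_left _ _

theorem cut_le {d : ℕ} (n : ℕ) (x : Ed d) : cut n x ≤ 1 := by
  refine max_le (by norm_num) ?_
  have : 0 ≤ ‖x‖ / ((n : ℝ) + 1) := by positivity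
  linarith

theorem cut_tendsto {d : ℕ} (x : Ed d) : Tendsto (fun n => cut n x) atTop (nhds 1) := by
  have h1 : Tendsto (fun n : ℕ => ‖x‖ / ((n : ℝ) + 1)) atTop (nhds 0) := by
    have := tendsto_one_div_add_atTop_nhds_zero_nat (𝕜 := ℝ) |>.const_mul ‖x‖
    simpa [div_eq_mul_inv] using this
  have := (tendsto_const_nhds (x := (0:ℝ))).max ((tendsto_const_nhds (x := (1:ℝ))).sub h1)
  simpa [cut] using this

open Set in
theorem step2 {d : ℕ} {u : ℝ → 𝓢(Ed d, ℂ)}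
    (cu : Continuous (fun p : ℝ × Ed d => u p.1 p.2))
    (cDD : ∀ i, Continuous (fun p : ℝ × Ed d => Dd i (Dd i (u p.1)) p.2))
    (hder : ∀ s x, HasDerivAt (fun r => u r x) (Complex.I * ∑ i, Dd i (Dd i (u s)) x) s)
    {a b N : ℝ} (hN : ∀ t ∈ Ioo a b, ∫ x, ‖u t x‖ ^ 2 ≤ N)
    (hN' : ∀ t ∈ Ioo a b, ∀ i, ∫ x, ‖Dd i (u t) x‖ ^ 2 ≤ N)
    {s t : ℝ} (hs : s ∈ Ioo a b) (ht : t ∈ Ioo a b) (ξ : Ed d) :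
    ph s ξ * FT (u s) ξ = ph t ξ * FT (u t) ξ := by
  have main : ∀ g : Ed d → ℝ, ContDiff ℝ ∞ g → HasCompactSupport g →
      ∫ ξ, g ξ • (ph t ξ * FT (u t) ξ - ph s ξ * FT (u s) ξ) = 0 := by
    intro g hg hgs
    obtain ⟨ψ, M, cψ, cΔ, hψd, hM, hM', hpair⟩ := exists_test (fun ξ => (g ξ : ℂ))
      (Complex.ofRealCLM.contDiff.comp hg) (hgs.comp_left Complex.ofReal_zero)
    set Φ : ℕ → ℝ → ℂ := fun n r => ∫ x, (cut n x : ℂ) * (u r x * ψ r x) with hΦ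
    have hcs : ∀ n, Continuous (cut (d := d) n) := fun n => (cut_lip n).continuous
    have cS : Continuous (fun p : ℝ × Ed d => ∑ i, Dd i (Dd i (u p.1)) p.2) :=
      continuous_finsetSum _ fun i _ => cDD i
    have hΦd : ∀ n r, HasDerivAt (Φ n) (∫ x, (cut n x : ℂ) *
        ((Complex.I * ∑ i, Dd i (Dd i (u r)) x) * ψ r x +
          u r x * (-Complex.I * ∑ i, Dd i (Dd i (ψ r)) x))) r := by
      intro n r
      have hcn := hcs n
      refine hasDerivAt_integral_cpt (cut_supp (d := d) n).isCompact
        (F := fun r x => (cut n x : ℂ) * (u r x * ψ r x))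
        (F' := fun r x => (cut n x : ℂ) *
        ((Complex.I * ∑ i, Dd i (Dd i (u r)) x) * ψ r x +
          u r x * (-Complex.I * ∑ i, Dd i (Dd i (ψ r)) x))) ?_ ?_ ?_ ?_ r
      · intro r
        have h1 := (u r).continuous
        have h2 := (ψ r).continuous
        fun_prop
      · fun_prop
      · intro r x
        exact ((hder r x).mul (hψd r x)).const_mul _
      · intro r x hx
        rw [image_eq_zero_of_notMem_tsupport hx]
        simp
    have hbd : ∀ n : ℕ, ‖Φ n t - Φ n s‖ ≤ (d * ((1 / (n + 1)) * (N + M))) * ‖t - s‖ := by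
      intro n
      refine (convex_Ioo a b).norm_image_sub_le_of_norm_hasDerivWithin_le
        (fun r hr => (hΦd n r).hasDerivWithinAt) (fun r hr => ?_) hs ht
      have h1 := green (cut_lip n) (cut_supp (d := d) n) (u r) (ψ r) (hN r hr) (hN' r hr)
        (hM r) (hM' r)
      rw [Real.coe_toNNReal _ (by positivity)] at h1
      refine le_trans (le_of_eq ?_) h1
      have e : ∀ x, (cut n x : ℂ) *
        ((Complex.I * ∑ i, Dd i (Dd i (u r)) x) * ψ r x +
          u r x * (-Complex.I * ∑ i, Dd i (Dd i (ψ r)) x)) = Complex.I * ((cut n x : ℂ) *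
          ((∑ i, Dd i (Dd i (u r)) x) * ψ r x - u r x * ∑ i, Dd i (Dd i (ψ r)) x)) := by
        intro x; ring
      simp_rw [e]
      rw [integral_const_mul, norm_mul, Complex.norm_I, one_mul]
    have hlim : ∀ r, Tendsto (fun n => Φ n r) atTop (nhds (∫ x, u r x * ψ r x)) := by
      intro r
      refine tendsto_integral_of_dominated_convergence (fun x => ‖prodS (u r) (ψ r) x‖) ?_ ?_ ?_ ?_
      · intro n
        exact (w_int (hcs n) (cut_supp n) (prodS (u r) (ψ r)).continuous).aestronglyMeasurable
      · exact (prodS (u r) (ψ r)).integrable.norm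
      · intro n
        refine Eventually.of_forall fun x => ?_
        rw [norm_mul, Complex.norm_real, Real.norm_of_nonneg (cut_nonneg n x)]
        exact mul_le_of_le_one_left (norm_nonneg _) (cut_le n x)
      · refine Eventually.of_forall fun x => ?_
        have h1 := ((Complex.continuous_ofReal.tendsto 1).comp (cut_tendsto x)).mul_const
          (u r x * ψ r x)
        simpa using h1
    have hz : ‖(∫ x, u t x * ψ t x) - ∫ x, u s x * ψ s x‖ ≤ 0 := by
      have h1 := ((hlim t).sub (hlim s)).norm
      have h2 : Tendsto (fun n : ℕ => (d * ((1 / ((n : ℝ) + 1)) * (N + M))) * ‖t - s‖) atTop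
          (nhds ((d * (0 * (N + M))) * ‖t - s‖)) :=
        ((tendsto_one_div_add_atTop_nhds_zero_nat.mul_const _).const_mul _).mul_const _
      have := le_of_tendsto_of_tendsto' h1 h2 hbd
      simpa using this
    have hz' := sub_eq_zero.mp (norm_le_zero_iff.mp hz)
    rw [hpair, hpair] at hz'
    have hi : ∀ r, Integrable fun ξ => (g ξ : ℂ) * (ph r ξ * FT (u r) ξ) := fun r =>
      w_int hg.continuous hgs ((ph_contDiff' r).continuous.mul (FT (u r)).continuous)
    rw [← sub_eq_zero, ← integral_sub (hi t) (hi s)] at hz'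
    rw [← hz']
    congr 1
    ext ξ
    rw [Complex.real_smul, mul_sub]
  have hc : ∀ r, Continuous fun ξ => ph r ξ * FT (u r) ξ := fun r =>
    (ph_contDiff' r).continuous.mul (FT (u r)).continuous
  have hae := ae_eq_zero_of_integral_contDiff_smul_eq_zero
    (((hc t).sub (hc s)).locallyIntegrable (μ := volume)) main
  have := Continuous.ae_eq_iff_eq volume ((hc t).sub (hc s)) continuous_zero |>.mp hae
  exact (sub_eq_zero.mp (congrFun this ξ)).symm

theorem FT_Dd {d : ℕ} (f : 𝓢(Ed d, ℂ)) (i : Fin d) (ξ : Ed d) :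
    FT (Dd i f) ξ = 2 * Real.pi * Complex.I * ((ξ i : ℝ) : ℂ) * FT f ξ := by
  have h : FT (Dd i f) = _ := SchwartzMap.fourier_lineDerivOp_eq f (stdBasis i)
  have : (fun x : Ed d => inner ℝ x (stdBasis i)).HasTemperateGrowth := by fun_prop
  have hi : inner ℝ ξ (stdBasis i) = ξ i := by
    simp [stdBasis, EuclideanSpace.inner_single_right]
  rw [h, smul_apply, SchwartzMap.smulLeftCLM_apply_apply this, hi, Complex.real_smul, smul_eq_mul,
    FT]
  ring

theorem FT_norm {d : ℕ} (f : 𝓢(Ed d, ℂ)) : ∫ x, ‖f x‖ ^ 2 = ∫ ξ, ‖FT f ξ‖ ^ 2 :=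
  (SchwartzMap.integral_norm_sq_fourier f).symm

theorem norm_eq_of_FT {d : ℕ} {f h : 𝓢(Ed d, ℂ)} (e : ∀ ξ, ‖FT f ξ‖ = ‖FT h ξ‖) :
    ∫ x, ‖f x‖ ^ 2 = ∫ x, ‖h x‖ ^ 2 := by
  rw [FT_norm f, FT_norm h]
  simp only [e]

theorem norm_Dd_eq_of_FT {d : ℕ} {f h : 𝓢(Ed d, ℂ)} (e : ∀ ξ, ‖FT f ξ‖ = ‖FT h ξ‖) (i : Fin d) :
    ∫ x, ‖Dd i f x‖ ^ 2 = ∫ x, ‖Dd i h x‖ ^ 2 :=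
  norm_eq_of_FT fun ξ => by
    rw [FT_Dd, FT_Dd]
    simp only [norm_mul, e]

theorem ph_neg {d : ℕ} (s : ℝ) (ξ : Ed d) : ph (-s) ξ * ph s ξ = 1 := by
  unfold ph
  rw [← Complex.exp_add, Complex.exp_eq_one_iff]
  refine ⟨0, ?_⟩
  push_cast
  ring

theorem v_closed {d : ℕ} {u : ℝ → 𝓢(Ed d, ℂ)}
    (cu : Continuous (fun p : ℝ × Ed d => u p.1 p.2)) (c : Ed d → ℂ) :
    IsClosed {t | (fun ξ => ph t ξ * FT (u t) ξ) = c} := by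
  apply IsSeqClosed.isClosed
  intro t t0 ht hlim
  have hF : ∀ n ξ, FT (u (t n)) ξ = ph (-t n) ξ * c ξ := by
    intro n ξ
    have : ph (t n) ξ * FT (u (t n)) ξ = c ξ := congrFun (ht n) ξ
    rw [← this, ← mul_assoc, ph_neg, one_mul]
  have hcc : Continuous c := by
    have : _ = c := ht 0
    rw [← this]
    exact (ph_contDiff' _).continuous.mul (FT _).continuous
  have hcn : ∀ ξ, ‖c ξ‖ = ‖FT (u (t 0)) ξ‖ := by
    intro ξ
    rw [hF, norm_mul, norm_ph, one_mul]
  have hci : Integrable c := by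
    refine (FT (u (t 0))).integrable.mono hcc.aestronglyMeasurable ?_
    exact Eventually.of_forall fun ξ => (hcn ξ).le
  set f : Ed d → ℂ := fun ξ => ph (-t0) ξ * c ξ with hf
  have hfc : Continuous f := (ph_contDiff' _).continuous.mul hcc
  have hfi : Integrable f := by
    refine hci.mono hfc.aestronglyMeasurable ?_
    exact Eventually.of_forall fun ξ => by rw [hf]; simp [norm_ph]
  have hinv : 𝓕⁻ f = ⇑(u t0) := by
    ext x
    have h1 : ∀ n, u (t n) x = ∫ ξ, Complex.exp (((2 * Real.pi * inner ℝ ξ x : ℝ) : ℂ) * Complex.I)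
        * (ph (-t n) ξ * c ξ) := by
      intro n
      have h2 : 𝓕⁻ (FT (u (t n))) = u (t n) := by
        rw [FT]; exact FourierTransform.fourierInv_fourier_eq _
      rw [← h2, SchwartzMap.fourierInv_coe, Real.fourierInv_eq']
      simp only [hF, smul_eq_mul]
    have h3 : Tendsto (fun n => u (t n) x) atTop (nhds (u t0 x)) := by
      have : Continuous fun r => u r x := cu.comp (by fun_prop : Continuous fun r => (r, x))
      exact (this.tendsto t0).comp hlim
    have h4 : Tendsto (fun n => u (t n) x) atTop (nhds (𝓕⁻ f x)) := by
      simp_rw [h1]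
      rw [Real.fourierInv_eq']
      refine tendsto_integral_of_dominated_convergence (fun ξ => ‖c ξ‖) ?_ hci.norm ?_ ?_
      · intro n
        have := (ph_contDiff' (d := d) (-t n)).continuous
        exact Continuous.aestronglyMeasurable (by fun_prop)
      · intro n
        refine Eventually.of_forall fun ξ => ?_
        rw [norm_mul, norm_mul, norm_ph, Complex.norm_exp_ofReal_mul_I]
        simp
      · refine Eventually.of_forall fun ξ => ?_
        simp only [hf, smul_eq_mul]
        have : Continuous fun r : ℝ => ph (-r) ξ :=
          (ph_contDiff (d := d)).continuous.comp (by fun_prop : Continuous fun r : ℝ => (-r, ξ))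
        exact (((this.tendsto t0).comp hlim).mul_const _).const_mul _
    exact tendsto_nhds_unique h4 h3
  have hFi : Integrable (𝓕 f) := by
    have h5 : 𝓕 f = fun x => u t0 (-x) := by
      ext x
      rw [← hinv, Real.fourierInv_eq_fourier_neg, neg_neg]
    rw [h5]
    exact (u t0).integrable.comp_neg
  have h6 : 𝓕 (𝓕⁻ f) = f := hfc.fourier_fourierInv_eq hfi hFi
  change (fun ξ => ph t0 ξ * FT (u t0) ξ) = c
  ext ξ
  have h7 : FT (u t0) ξ = f ξ := by
    rw [← h6, hinv]
    rfl
  rw [h7, hf]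
  simp only
  rw [← mul_assoc, mul_comm (ph t0 ξ), ph_neg, one_mul]

open Set in
theorem conserve {d : ℕ} {u : ℝ → 𝓢(Ed d, ℂ)}
    (cu : Continuous (fun p : ℝ × Ed d => u p.1 p.2))
    (cD : ∀ i, Continuous (fun p : ℝ × Ed d => Dd i (u p.1) p.2))
    (cDD : ∀ i, Continuous (fun p : ℝ × Ed d => Dd i (Dd i (u p.1)) p.2))
    (hder : ∀ s x, HasDerivAt (fun r => u r x) (Complex.I * ∑ i, Dd i (Dd i (u s)) x) s)
    (s t : ℝ) (i : Fin d) : ∫ x, ‖Dd i (u s) x‖ ^ 2 = ∫ x, ‖Dd i (u t) x‖ ^ 2 := by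
  have h_int : ∀ t, Integrable fun x => ‖u t x‖ ^ 2 + ∑ i, ‖Dd i (u t) x‖ ^ 2 := fun t =>
    (sq_int (u t)).add (integrable_finsetSum _ fun i _ => sq_int _)
  have hI : ∀ t, ∫⁻ x, ENNReal.ofReal (‖u t x‖ ^ 2 + ∑ i, ‖Dd i (u t) x‖ ^ 2) =
      ENNReal.ofReal ((∫ x, ‖u t x‖ ^ 2) + ∑ i, ∫ x, ‖Dd i (u t) x‖ ^ 2) := by
    intro t
    rw [← ofReal_integral_eq_lintegral_ofReal (h_int t)
      (Eventually.of_forall fun x => by positivity),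
      integral_add (sq_int (u t)) (integrable_finsetSum _ fun i _ => sq_int _),
      integral_finsetSum _ fun i _ => sq_int _]
  have hnn : ∀ f : 𝓢(Ed d, ℂ), 0 ≤ ∫ x, ‖f x‖ ^ 2 := fun f => integral_nonneg fun x => by positivity
  have hphn : ∀ s t, (fun ξ => ph s ξ * FT (u s) ξ) = (fun ξ => ph t ξ * FT (u t) ξ) →
      ∀ ξ, ‖FT (u s) ξ‖ = ‖FT (u t) ξ‖ := by
    intro s t h ξ
    have := congrArg norm (congrFun h ξ)
    simpa [norm_ph] using this
  have key := baire_const (fun t => fun ξ => ph t ξ * FT (u t) ξ)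
    (fun t => ∫⁻ x, ENNReal.ofReal (‖u t x‖ ^ 2 + ∑ i, ‖Dd i (u t) x‖ ^ 2))
    (fun N => isClosed_lintegral_le (f := fun t x => ‖u t x‖ ^ 2 + ∑ i, ‖Dd i (u t) x‖ ^ 2)
      (by fun_prop) N)
    (fun t => by rw [hI]; exact ENNReal.ofReal_lt_top)
    (fun s t h => by
      simp only [hI]
      rw [norm_eq_of_FT (hphn s t h)]
      simp_rw [fun i => norm_Dd_eq_of_FT (hphn s t h) i])
    (v_closed cu)
    (fun a b N h s hs t ht => by
      have hle : ∀ t ∈ Ioo a b, (∫ x, ‖u t x‖ ^ 2) + ∑ i, ∫ x, ‖Dd i (u t) x‖ ^ 2 ≤ N := by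
        intro t ht
        have := h t ht
        simp only [hI] at this
        rw [← ENNReal.ofReal_natCast] at this
        exact (ENNReal.ofReal_le_ofReal_iff (by positivity)).mp this
      ext ξ
      refine step2 cu cDD hder (a := a) (b := b) (N := N) ?_ ?_ hs ht ξ
      · intro t ht
        have := Finset.sum_nonneg (s := Finset.univ) fun i _ => hnn (Dd i (u t))
        linarith [hle t ht]
      · intro t ht i
        have := Finset.single_le_sum (f := fun i => ∫ x, ‖Dd i (u t) x‖ ^ 2)
          (fun j _ => hnn (Dd j (u t))) (Finset.mem_univ i)
        linarith [hle t ht, hnn (u t)])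
  exact norm_Dd_eq_of_FT (hphn s t (key s t)) i

theorem sum_sq_le {d : ℕ} (l : Ed d →L[ℝ] ℝ) {L : ℝ} (hl : ‖l‖ ≤ L) :
    ∑ i, (l (stdBasis i)) ^ 2 ≤ L ^ 2 := by
  set v := (InnerProductSpace.toDual ℝ (Ed d)).symm l with hv
  have h1 : ∀ i, l (stdBasis i) = v i := by
    intro i
    rw [← InnerProductSpace.toDual_symm_apply (y := l), ← hv]
    simp [stdBasis, EuclideanSpace.inner_single_right]
  have h2 : ‖v‖ = ‖l‖ := by rw [hv]; simp
  have h3 : ‖v‖ ^ 2 = ∑ i, (l (stdBasis i)) ^ 2 := by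
    rw [EuclideanSpace.norm_sq_eq]
    simp [h1]
  rw [← h3, h2]
  exact pow_le_pow_left₀ (norm_nonneg _) hl 2

theorem sq_lip {d : ℕ} {w : Ed d → ℝ} {L : NNReal} (hw : LipschitzWith L w)
    (h0 : ∀ x, 0 ≤ w x) (h1 : ∀ x, w x ≤ 1) : LipschitzWith (2 * L) (fun x => w x ^ 2) := by
  refine LipschitzWith.of_dist_le_mul fun x y => ?_
  have h := hw.dist_le_mul x y
  rw [Real.dist_eq] at h ⊢
  have e : w x ^ 2 - w y ^ 2 = (w x + w y) * (w x - w y) := by ring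
  rw [e, abs_mul, abs_of_nonneg (add_nonneg (h0 x) (h0 y))]
  push_cast
  rw [mul_assoc]
  exact mul_le_mul (by linarith [h1 x, h1 y]) h (abs_nonneg _) (by norm_num)

theorem flux {d : ℕ} {w : Ed d → ℝ} {L : NNReal} (hw : LipschitzWith L w) (hL : 0 < L)
    (hws : HasCompactSupport w) (h0 : ∀ x, 0 ≤ w x) (h1 : ∀ x, w x ≤ 1)
    (f : 𝓢(Ed d, ℂ)) {lam : ℝ} (hlam : 0 < lam) :
    ∫ x, w x ^ 2 * (2 * inner ℝ (f x) (Complex.I * ∑ i, Dd i (Dd i f) x)) ≤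
      2 * L * (lam * (∫ x, w x ^ 2 * ‖f x‖ ^ 2) + (∑ i, ∫ x, ‖Dd i f x‖ ^ 2) / lam) := by
  have hL' : (0 : ℝ) < L := hL
  set W : Ed d → ℝ := fun x => w x ^ 2 with hW
  have hWl : LipschitzWith (2 * L) W := sq_lip hw h0 h1
  have hWs : HasCompactSupport W := by
    have : HasCompactSupport ((fun y : ℝ => y ^ 2) ∘ w) := hws.comp_left (by norm_num)
    exact this
  set G : Fin d → 𝓢(Ed d, ℂ) := fun i => prodS (Dd i f) (conjS f) with hG
  have hDG : ∀ i x, Dd i (G i) x = Dd i (Dd i f) x * (starRingEnd ℂ) (f x) +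
      ((‖Dd i f x‖ ^ 2 : ℝ) : ℂ) := by
    intro i x
    rw [hG, Dd_prodS, Dd_conjS, conjS_apply, Complex.mul_conj']
    push_cast
    rfl
  have e1 : ∀ x, w x ^ 2 * (2 * inner ℝ (f x) (Complex.I * ∑ i, Dd i (Dd i f) x)) =
      (∑ i, 2 * Complex.I * ((W x : ℂ) * Dd i (G i) x)).re := by
    intro x
    have e2 : ∑ i, 2 * Complex.I * ((W x : ℂ) * Dd i (G i) x) =
        (W x : ℂ) * (2 * (Complex.I * (∑ i, Dd i (Dd i f) x) * (starRingEnd ℂ) (f x))) +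
        ((2 * W x * ∑ i, ‖Dd i f x‖ ^ 2 : ℝ) : ℂ) * Complex.I := by
      simp_rw [hDG]
      push_cast
      simp only [Finset.mul_sum, Finset.sum_mul, ← Finset.sum_add_distrib]
      refine Finset.sum_congr rfl fun i _ => ?_
      ring
    rw [e2, Complex.add_re, Complex.re_ofReal_mul, Complex.re_ofReal_mul, Complex.I_re,
      Complex.inner]
    simp [hW]
  have i1 : ∀ i, Integrable fun x => 2 * Complex.I * ((W x : ℂ) * Dd i (G i) x) := fun i =>
    (w_int hWl.continuous hWs (Dd i (G i)).continuous).const_mul _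
  have i2 : ∀ i, Integrable fun x =>
      -(2 * Complex.I) * (((lineDeriv ℝ W x (stdBasis i) : ℝ) : ℂ) * G i x) := fun i =>
    (lineDeriv_mul_integrable hWl (G i).integrable (stdBasis i)).const_mul _
  have e3 : ∫ x, ∑ i, 2 * Complex.I * ((W x : ℂ) * Dd i (G i) x) =
      ∫ x, ∑ i, -(2 * Complex.I) * (((lineDeriv ℝ W x (stdBasis i) : ℝ) : ℂ) * G i x) := by
    rw [integral_finsetSum _ fun i _ => i1 i, integral_finsetSum _ fun i _ => i2 i]
    refine Finset.sum_congr rfl fun i _ => ?_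
    rw [integral_const_mul, integral_const_mul]
    have h1 : ∫ x, (W x : ℂ) * Dd i (G i) x = _ := ibp hWl hWs (G i) (stdBasis i)
    rw [h1]
    ring
  simp_rw [e1]
  have e4 : ∫ x, (∑ i, 2 * Complex.I * ((W x : ℂ) * Dd i (G i) x)).re =
      (∫ x, ∑ i, 2 * Complex.I * ((W x : ℂ) * Dd i (G i) x)).re :=
    integral_re (𝕜 := ℂ) (integrable_finsetSum _ fun i _ => i1 i)
  rw [e4, e3]
  have j0 : Integrable fun x => W x * ‖f x‖ ^ 2 := by
    have hfc := f.continuous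
    have hWc := hWl.continuous
    refine Continuous.integrable_of_hasCompactSupport (by fun_prop) ?_
    exact HasCompactSupport.mul_right hWs
  have j1 : Integrable fun x => ∑ i, ‖Dd i f x‖ ^ 2 := integrable_finsetSum _ fun i _ => sq_int _
  have j2 : Integrable fun x =>
      2 * L * (lam * (W x * ‖f x‖ ^ 2) + (∑ i, ‖Dd i f x‖ ^ 2) / lam) :=
    ((j0.const_mul lam).add (j1.div_const lam)).const_mul _
  have e5 : ∫ x, 2 * L * (lam * (W x * ‖f x‖ ^ 2) + (∑ i, ‖Dd i f x‖ ^ 2) / lam) =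
      2 * L * (lam * (∫ x, W x * ‖f x‖ ^ 2) + (∑ i, ∫ x, ‖Dd i f x‖ ^ 2) / lam) := by
    rw [integral_const_mul, integral_add (j0.const_mul lam) (j1.div_const lam),
      integral_const_mul, integral_div, integral_finsetSum _ fun i _ => sq_int _]
  refine le_trans ?_ e5.le
  refine (Complex.re_le_norm _).trans (norm_integral_le_of_norm_le j2 ?_)
  filter_upwards [hw.ae_differentiableAt (μ := volume)] with x hx
  set l := fderiv ℝ w x with hl
  have hln : ‖l‖ ≤ L := norm_fderiv_le_of_lipschitz ℝ hw
  have hld : ∀ v, lineDeriv ℝ W x v = 2 * w x * l v := by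
    intro v
    have h3 : HasFDerivAt W _ x := hx.hasFDerivAt.pow 2
    rw [h3.hasLineDerivAt v |>.lineDeriv]
    simp [hl]
  refine (norm_sum_le _ _).trans ?_
  have hi : ∀ i ∈ Finset.univ,
      ‖-(2 * Complex.I) * (((lineDeriv ℝ W x (stdBasis i) : ℝ) : ℂ) * G i x)‖ ≤
      2 * (lam * (W x * ‖f x‖ ^ 2) / L * (l (stdBasis i)) ^ 2 + L * ‖Dd i f x‖ ^ 2 / lam) := by
    intro i _
    have hGi : G i x = Dd i f x * (starRingEnd ℂ) (f x) := rfl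
    rw [hGi, hld, norm_mul, norm_mul, norm_neg, norm_mul, Complex.norm_I, Complex.norm_real,
      norm_mul, norm_mul, norm_mul (Dd i f x), RCLike.norm_conj, Real.norm_of_nonneg (h0 x), hW]
    simp only [Complex.norm_ofNat, Real.norm_ofNat, Real.norm_eq_abs]
    rw [← sq_abs (l (stdBasis i))]
    set a := w x * ‖f x‖ with ha
    set p := |l (stdBasis i)|
    set q := ‖Dd i f x‖
    have key : 2 * (a * p) * q ≤ lam * a ^ 2 / L * p ^ 2 + L * q ^ 2 / lam := by
      have e : lam * a ^ 2 / L * p ^ 2 + L * q ^ 2 / lam - 2 * (a * p) * q =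
          (lam * (a * p) - L * q) ^ 2 / (L * lam) := by
        field_simp
        ring
      have : 0 ≤ (lam * (a * p) - L * q) ^ 2 / (L * lam) := by positivity
      linarith
    have e6 : w x ^ 2 * ‖f x‖ ^ 2 = a ^ 2 := by rw [ha]; ring
    rw [e6]
    have e7 : 2 * 1 * (2 * w x * p * (q * ‖f x‖)) = 2 * (2 * (a * p) * q) := by rw [ha]; ring
    rw [e7]
    linarith
  refine (Finset.sum_le_sum hi).trans ?_
  rw [← Finset.mul_sum, Finset.sum_add_distrib, ← Finset.mul_sum, ← Finset.sum_div,
    ← Finset.mul_sum]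
  have hs := sum_sq_le l hln
  have hA : 0 ≤ lam * (W x * ‖f x‖ ^ 2) / L := by
    have : 0 ≤ W x := sq_nonneg _
    positivity
  have := mul_le_mul_of_nonneg_left hs hA
  have e8 : lam * (W x * ‖f x‖ ^ 2) / L * (L : ℝ) ^ 2 = L * (lam * (W x * ‖f x‖ ^ 2)) := by
    field_simp
  rw [e8] at this
  have e9 : 2 * (L : ℝ) * (lam * (W x * ‖f x‖ ^ 2) + (∑ i, ‖Dd i f x‖ ^ 2) / lam) =
    2 * (L * (lam * (W x * ‖f x‖ ^ 2)) + L * (∑ i, ‖Dd i f x‖ ^ 2) / lam) := by ring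
  rw [e9]
  linarith

theorem weight_bound {d : ℕ} {u : ℝ → 𝓢(Ed d, ℂ)}
    (cu : Continuous (fun p : ℝ × Ed d => u p.1 p.2))
    (cDD : ∀ i, Continuous (fun p : ℝ × Ed d => Dd i (Dd i (u p.1)) p.2))
    (hder : ∀ s x, HasDerivAt (fun r => u r x) (Complex.I * ∑ i, Dd i (Dd i (u s)) x) s)
    {K : ℝ} (hK : 0 ≤ K) (hcons : ∀ s, ∑ i, ∫ x, ‖Dd i (u s) x‖ ^ 2 = K ^ 2)
    {w : Ed d → ℝ} {L : NNReal} (hw : LipschitzWith L w) (hL : 0 < L)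
    (hws : HasCompactSupport w) (h0 : ∀ x, 0 ≤ w x) (h1 : ∀ x, w x ≤ 1)
    (hz : ∀ x, w x = 0 ∨ u 0 x = 0) {δ : ℝ} (hδ : 0 < δ) {t : ℝ} (ht : 0 ≤ t) :
    Real.sqrt (∫ x, w x ^ 2 * ‖u t x‖ ^ 2) ≤ δ + 2 * L * (K + δ) * t := by
  set q : ℝ → ℝ := fun s => ∫ x, w x ^ 2 * ‖u s x‖ ^ 2 with hq
  have hwc := hw.continuous
  have cS : Continuous (fun p : ℝ × Ed d => ∑ i, Dd i (Dd i (u p.1)) p.2) :=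
    continuous_finsetSum _ fun i _ => cDD i
  have hqd : ∀ s, HasDerivAt q
      (∫ x, w x ^ 2 * (2 * inner ℝ (u s x) (Complex.I * ∑ i, Dd i (Dd i (u s)) x))) s := by
    intro s
    refine hasDerivAt_integral_cpt hws.isCompact
      (F := fun s x => w x ^ 2 * ‖u s x‖ ^ 2)
      (F' := fun s x => w x ^ 2 * (2 * inner ℝ (u s x) (Complex.I * ∑ i, Dd i (Dd i (u s)) x)))
      ?_ ?_ ?_ ?_ s
    · intro r
      have h1 := (u r).continuous
      fun_prop
    · fun_prop
    · intro r x
      exact ((hder r x).norm_sq).const_mul _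
    · intro r x hx
      rw [image_eq_zero_of_notMem_tsupport hx]
      simp
  have hqn : ∀ s, 0 ≤ q s := fun s => integral_nonneg fun x => by positivity
  have hpos : ∀ s, 0 < q s + δ ^ 2 := fun s => by have := hqn s; positivity
  have hYd : ∀ s, HasDerivAt (fun s => Real.sqrt (q s + δ ^ 2)) _ s := fun s =>
    ((hqd s).add_const (δ ^ 2)).sqrt (hpos s).ne'
  have hYle : ∀ s, deriv (fun s => Real.sqrt (q s + δ ^ 2)) s ≤ 2 * L * (K + δ) := by
    intro s
    rw [(hYd s).deriv]
    set Y := Real.sqrt (q s + δ ^ 2) with hY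
    have hYp : 0 < Y := Real.sqrt_pos.mpr (hpos s)
    have hY2 : Y ^ 2 = q s + δ ^ 2 := Real.sq_sqrt (hpos s).le
    have hk : 0 < K + δ := by positivity
    have hf := flux hw hL hws h0 h1 (u s) (lam := (K + δ) / Y) (by positivity)
    rw [hcons s] at hf
    rw [div_le_iff₀ (by positivity)]
    refine hf.trans ?_
    have b1 : (K + δ) / Y * q s ≤ (K + δ) * Y := by
      rw [div_mul_eq_mul_div, div_le_iff₀ hYp, mul_assoc]
      refine mul_le_mul_of_nonneg_left ?_ hk.le
      nlinarith
    have b2 : K ^ 2 / ((K + δ) / Y) ≤ (K + δ) * Y := by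
      rw [div_div_eq_mul_div, div_le_iff₀ hk]
      have : K ^ 2 ≤ (K + δ) ^ 2 := by nlinarith
      nlinarith [mul_le_mul_of_nonneg_right this hYp.le]
    have b3 := mul_le_mul_of_nonneg_left (add_le_add b1 b2) (by positivity : 0 ≤ 2 * (L : ℝ))
    refine b3.trans (le_of_eq (by ring))
  have hm := image_sub_le_mul_sub_of_deriv_le (fun s => (hYd s).differentiableAt) hYle ht
  have hq0 : q 0 = 0 := by
    rw [hq]
    simp only
    rw [← integral_zero (Ed d) ℝ (μ := volume)]
    congr 1
    ext x
    rcases hz x with h | h <;> simp [h]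
  simp only [hq0, zero_add, sub_zero] at hm
  rw [Real.sqrt_sq hδ.le] at hm
  have : Real.sqrt (q t) ≤ Real.sqrt (q t + δ ^ 2) := Real.sqrt_le_sqrt (by nlinarith)
  linarith

/-- Finite speed of disturbance for the linear Schrödinger equation:
if `supp u(0) ⊆ A` and `dist(A,B) > 0`, then
`‖u(t)‖_{L²(B)} ≤ (2 ‖∇u(0)‖₂ / dist(A,B)) t` for all `t ≥ 0`. -/
theorem finite_speed_of_disturbance_linear
    {d : ℕ} (hd : 1 ≤ d) (u : ℝ → SchwartzMap (Ed d) ℂ)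
    (hu : IsLinSchrodSol d u)
    (A B : Set (Ed d)) (hA : A.Nonempty) (hB : B.Nonempty)
    (hAB : 0 < setDist A B)
    (hsupp : Function.support (⇑(u 0)) ⊆ A)
    (t : ℝ) (ht : 0 ≤ t) :
    L2On B (fun x => u t x) ≤
      2 * gradL2 (fun x => u 0 x) / setDist A B * t := by
  clear hd
  obtain ⟨hs, hpde⟩ := hu
  have cu := hs.continuous
  have sD : ∀ i, ContDiff ℝ (⊤ : ℕ∞) (fun p : ℝ × Ed d => Dd i (u p.1) p.2) := fun i =>
    joint_deriv hs (stdBasis i)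
  have cD := fun i => (sD i).continuous
  have cDD : ∀ i, Continuous (fun p : ℝ × Ed d => Dd i (Dd i (u p.1)) p.2) := fun i =>
    (joint_deriv (f := fun s => Dd i (u s)) (sD i) (stdBasis i)).continuous
  have hder : ∀ s x, HasDerivAt (fun r => u r x) (Complex.I * ∑ i, Dd i (Dd i (u s)) x) s := by
    intro s x
    have h1 : DifferentiableAt ℝ (fun r => u r x) s := by
      have h2 : ContDiff ℝ (⊤ : ℕ∞) (fun r => u r x) :=
        hs.comp (by fun_prop : ContDiff ℝ (⊤ : ℕ∞) fun r : ℝ => (r, x))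
      exact (h2.differentiable (by simp)) s
    have h3 := h1.hasDerivAt
    rw [hpde] at h3
    exact h3
  set D := setDist A B with hD
  set K := gradL2 (fun x => u 0 x) with hKdef
  have hcons : ∀ s, ∑ i, ∫ x, ‖Dd i (u s) x‖ ^ 2 = K ^ 2 := by
    intro s
    have h1 : ∑ i, ∫ x, ‖Dd i (u s) x‖ ^ 2 = ∑ i, ∫ x, ‖Dd i (u 0) x‖ ^ 2 :=
      Finset.sum_congr rfl fun i _ => conserve cu cD cDD hder s 0 i
    have h2 : ∫ x, gradNormSq (fun x => u 0 x) x = ∑ i, ∫ x, ‖Dd i (u 0) x‖ ^ 2 := by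
      rw [← integral_finsetSum _ fun i _ => sq_int _]
      rfl
    rw [h1, ← h2, hKdef, gradL2, ← Real.sqrt_eq_rpow, Real.sq_sqrt]
    rw [h2]
    exact Finset.sum_nonneg fun i _ => integral_nonneg fun x => by positivity
  have hK : 0 ≤ K := by
    rw [hKdef, gradL2, ← Real.sqrt_eq_rpow]
    exact Real.sqrt_nonneg _
  set S : Set (Ed d) := {x | D ≤ Metric.infDist x A} with hS
  have hSm : MeasurableSet S :=
    (isClosed_le continuous_const (Metric.continuous_infDist_pt A)).measurableSet
  have hBS : B ⊆ S := by
    intro x hx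
    change D ≤ Metric.infDist x A
    rw [Metric.le_infDist hA]
    intro y hy
    rw [dist_comm, hD, setDist]
    refine csInf_le ⟨0, ?_⟩ ⟨y, hy, x, hx, rfl⟩
    rintro _ ⟨a, _, b, _, rfl⟩
    exact dist_nonneg
  set w : ℕ → Ed d → ℝ := fun n x =>
    max 0 (min 1 (Metric.infDist x A / D) - ‖x‖ / ((n : ℝ) + 1)) with hw
  have hwn : ∀ n x, 0 ≤ w n x := fun n x => le_max_left _ _
  have hw1 : ∀ n x, w n x ≤ 1 := by
    intro n x
    refine max_le (by norm_num) ?_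
    have h1 : 0 ≤ ‖x‖ / ((n : ℝ) + 1) := by positivity
    linarith [min_le_left 1 (Metric.infDist x A / D)]
  have hwl : ∀ n : ℕ, LipschitzWith (Real.toNNReal (1 / D + 1 / ((n : ℝ) + 1))) (w n) := by
    intro n
    refine LipschitzWith.of_dist_le_mul fun x y => ?_
    have hn : (0 : ℝ) < n + 1 := by positivity
    rw [Real.coe_toNNReal _ (by positivity), Real.dist_eq]
    refine (abs_max_sub_max_le_max _ _ _ _).trans ?_
    rw [sub_zero, abs_zero]
    refine max_le (by positivity) ?_
    have h1 : |min 1 (Metric.infDist x A / D) - min 1 (Metric.infDist y A / D)| ≤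
        1 / D * dist x y := by
      refine (abs_min_sub_min_le_max _ _ _ _).trans ?_
      rw [sub_self, abs_zero]
      refine max_le (by positivity) ?_
      rw [← sub_div, abs_div, abs_of_pos hAB, div_mul_eq_mul_div, one_mul]
      refine div_le_div_of_nonneg_right ?_ hAB.le
      have := (Metric.lipschitz_infDist_pt A).dist_le_mul x y
      simpa [Real.dist_eq] using this
    have h2 : |‖x‖ / ((n : ℝ) + 1) - ‖y‖ / ((n : ℝ) + 1)| ≤ 1 / ((n : ℝ) + 1) * dist x y := by
      rw [← sub_div, abs_div, abs_of_pos hn, div_mul_eq_mul_div, one_mul, dist_eq_norm]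
      exact div_le_div_of_nonneg_right (abs_norm_sub_norm_le _ _) hn.le
    rw [add_mul, sub_sub_sub_comm]
    exact (abs_sub _ _).trans (add_le_add h1 h2)
  have hws : ∀ n, HasCompactSupport (w n) := by
    intro n
    refine HasCompactSupport.intro (isCompact_closedBall (0 : Ed d) (n + 1)) fun x hx => ?_
    have hn : (0 : ℝ) < n + 1 := by positivity
    rw [Metric.mem_closedBall, dist_zero_right, not_le] at hx
    refine max_eq_left ?_
    rw [sub_nonpos]
    refine (min_le_left _ _).trans ?_
    rw [le_div_iff₀ hn]
    linarith
  have hwz : ∀ n x, w n x = 0 ∨ u 0 x = 0 := by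
    intro n x
    by_cases hx : x ∈ A
    · left
      refine max_eq_left ?_
      rw [Metric.infDist_zero_of_mem hx]
      have h1 : 0 ≤ ‖x‖ / ((n : ℝ) + 1) := by positivity
      simpa using h1
    · right
      by_contra h
      exact hx (hsupp h)
  have hwS : ∀ n, ∀ x ∈ S, w n x = cut n x := by
    intro n x hx
    have h1 : 1 ≤ Metric.infDist x A / D := by
      rw [le_div_iff₀ hAB, one_mul]
      exact hx
    rw [hw, cut]
    simp only
    rw [min_eq_left h1]
  have hbound : ∀ n : ℕ, Real.sqrt (∫ x in S, cut n x ^ 2 * ‖u t x‖ ^ 2) ≤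
      1 / ((n : ℝ) + 1) + 2 * (1 / D + 1 / ((n : ℝ) + 1)) * (K + 1 / ((n : ℝ) + 1)) * t := by
    intro n
    have hp : 0 < 1 / D + 1 / ((n : ℝ) + 1) := by positivity
    have h1 := weight_bound cu cDD hder hK hcons (hwl n) (by simpa using hp) (hws n) (hwn n)
      (hw1 n) (hwz n) (δ := 1 / ((n : ℝ) + 1)) (by positivity) ht
    rw [Real.coe_toNNReal _ hp.le] at h1
    refine le_trans (Real.sqrt_le_sqrt ?_) h1
    have h2 : ∫ x in S, cut n x ^ 2 * ‖u t x‖ ^ 2 = ∫ x in S, w n x ^ 2 * ‖u t x‖ ^ 2 :=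
      setIntegral_congr_fun hSm fun x hx => by simp only [hwS n x hx]
    rw [h2]
    refine setIntegral_le_integral ?_ (Eventually.of_forall fun x => (by positivity : (0 : ℝ) ≤ w n x ^ 2 * ‖u t x‖ ^ 2))
    have c1 := (u t).continuous
    have c2 := (hwl n).continuous
    refine (sq_int (u t)).mono (Continuous.aestronglyMeasurable (by fun_prop)) ?_
    refine Eventually.of_forall fun x => ?_
    rw [norm_mul, norm_pow, Real.norm_of_nonneg (hwn n x)]
    exact mul_le_of_le_one_left (norm_nonneg _) (pow_le_one₀ (hwn n x) (hw1 n x))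
  have hlim : Tendsto (fun n : ℕ => ∫ x in S, cut n x ^ 2 * ‖u t x‖ ^ 2) atTop
      (nhds (∫ x in S, ‖u t x‖ ^ 2)) := by
    have c1 := (u t).continuous
    refine tendsto_integral_of_dominated_convergence (fun x => ‖u t x‖ ^ 2) ?_
      (sq_int (u t)).integrableOn ?_ ?_
    · intro n
      have c2 := (cut_lip (d := d) n).continuous
      exact Continuous.aestronglyMeasurable (by fun_prop)
    · intro n
      refine Eventually.of_forall fun x => ?_
      rw [norm_mul, norm_pow, Real.norm_of_nonneg (cut_nonneg n x), norm_pow, norm_norm]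
      exact mul_le_of_le_one_left (by positivity) (pow_le_one₀ (cut_nonneg n x) (cut_le n x))
    · refine Eventually.of_forall fun x => ?_
      simpa using ((cut_tendsto x).pow 2).mul_const (‖u t x‖ ^ 2)
  have hδ := tendsto_one_div_add_atTop_nhds_zero_nat (𝕜 := ℝ)
  have hR := hδ.add ((((hδ.const_add (1 / D)).const_mul 2).mul (hδ.const_add K)).mul_const t)
  have hfin := le_of_tendsto_of_tendsto' hlim.sqrt hR hbound
  have hLB : L2On B (fun x => u t x) ≤ Real.sqrt (∫ x in S, ‖u t x‖ ^ 2) := by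
    rw [L2On, ← Real.sqrt_eq_rpow]
    refine Real.sqrt_le_sqrt ?_
    exact setIntegral_mono_set (sq_int (u t)).integrableOn
      (Eventually.of_forall fun x => by positivity) (LE.le.eventuallyLE hBS)
  refine hLB.trans (hfin.trans (le_of_eq ?_))
  ring
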